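/- Let T > 0, let F assign continuously to each t ∈ [0,T] real values F(t)(i,j) at interior points, and let u₀, u₁ be grid functions vanishing on the boundary. Let y₀ : [0,T] → (grid functions vanishing on the boundary) be the C² solution of the reference semi-discrete wave equation ∂_t² y₀(t)(i,j) + (A y₀(t))(i,j) = F(t)(i,j) at interior points, y₀(0) = u₀, ∂_t y₀(0) = u₁, and assume the discrete non-degeneracy condition: (1/2) y₀(t)(2,j) − 2 y₀(t)(1,j) ≠ 0 for every t ∈ [0,T] and every j with 1 ≤ j ≤ N−1. Then the semi-discrete wave equation is locally exactly controllable by the shape of the domain: there exist ε ∈ (0,1/2) and δ > 0 such that for every pair of families of interior values (Z, W) with max over interior (i,j) of (|Z(i,j) − y₀(T)(i,j)| + |W(i,j) − ∂_t y₀(T)(i,j)|) < δ, there exist a continuously differentiable λ : [0,T] → ℝ^{N−1} with sup_{t,j} |λ_j(t)| ≤ ε and sup_{t,j} |λ_j'(t)| < 1, and a C² map u : [0,T] → (grid functions vanishing on the boundary) such that ∂_t² u(t)(i,j) + (A(λ(t)) u(t))(i,j) = F(t)(i,j) at interior points, u(0) = u₀, ∂_t u(0) = u₁, and u(T)(i,j)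 = Z(i,j), ∂_t u(T)(i,j) = W(i,j) at every interior point. -/

import Mathlib

open Set

/-- The point `(i,j)` is an interior node of the grid `Ω_h`. -/
def isInterior (M N : ℤ) (i j : ℤ) : Prop :=
  1 ≤ i ∧ i ≤ M - 1 ∧ 1 ≤ j ∧ j ≤ N - 1

/-- The point `(i,j)` belongs to the grid `Ω_h`. -/
def onGrid (M N : ℤ) (i j : ℤ) : Prop :=
  0 ≤ i ∧ i ≤ M ∧ 0 ≤ j ∧ j ≤ N

/-- The point `(i,j)` belongs to the discrete boundary `Γ⁰` of `Ω_h`. -/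
def onBoundary (M N : ℤ) (i j : ℤ) : Prop :=
  onGrid M N i j ∧ ¬ isInterior M N i j

/-- The discrete Dirichlet Laplacian `(A X)(i,j)`. -/
noncomputable def discLap (h : ℝ) (X : ℤ → ℤ → ℝ) (i j : ℤ) : ℝ :=
  (1 / h ^ 2) * (4 * X i j - X (i + 1) j - X (i - 1) j - X i (j + 1) - X i (j - 1))

/-- The perturbed operator `A(λ)`: it agrees with the discrete Laplacian away from the
first layer `i = 1`, and is modified on the first layer according to the deformation `λ`. -/
noncomputable def pertOp (h : ℝ) (lam : ℤ → ℝ) (X : ℤ → ℤ → ℝ) (i j : ℤ) : ℝ :=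
  if i = 1 then
    (1 / h ^ 2) * (2 * (1 + 1 / (1 + lam j)) * X 1 j - (2 / (2 + lam j)) * X 2 j
      - X 1 (j + 1) - X 1 (j - 1))
  else discLap h X i j

open scoped ContDiff Topology

/-!
Write `u = y₀ + V`, where `V` steers the error at time `T` to zero and starts from rest at `0`. In
the rows `2, …, M - 1` the curve `V` has to solve the free equation, and there the scheme is flat:
the last row `p` determines all the others, row `i` being `Sₘ₋ᵢ(D) p` with `m = M - 1`, `S` the
rescaled Chebyshev polynomials and `D = h² ∂ₜ² + L`, `L` the operator inside a row. Hence
multiplying the last row of the free solution through the target data by a cutoff in time and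
rebuilding the other rows produces `V`, linearly in the target.

In the first row `V` leaves a defect, which `λ` absorbs. With `u₁`, `u₂` the values of `u` in the
first two rows, `λ` solves a quadratic equation whose constant term is proportional to the defect
and whose linear coefficient is `u₂ - 4 u₁` up to the defect, nonzero by assumption, so its small
root depends smoothly on the data and vanishes with the defect. Since `V` ranges over a linear
family with finitely many parameters, compactness of `[0, T]` makes `λ` and `λ'` uniformly small
near the reference target.
-/

/-! ### Smooth curves -/

/-- The space of smooth curves in `E`. Working in a module on which differentiation is an
endomorphism lets differential operators in time be polynomials in endomorphisms. -/
def smoothCurve (E : Type*) [NormedAddCommGroup E] [NormedSpace ℝ E] : Submodule ℝ (ℝ → E) where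
  carrier := {f | ContDiff ℝ ∞ f}
  add_mem' {_ _} hf hg := hf.out.add hg
  zero_mem' := Set.mem_ofPred.2 contDiff_const
  smul_mem' c _ hf := hf.out.const_smul c

namespace smoothCurve

variable {E F X ι : Type*} [NormedAddCommGroup E] [NormedSpace ℝ E] [NormedAddCommGroup F]
  [NormedSpace ℝ F] [Fintype ι]

instance : CoeFun (smoothCurve E) fun _ => ℝ → E := ⟨Subtype.val⟩

lemma contDiff (f : smoothCurve E) : ContDiff ℝ ∞ f := f.2

lemma differentiable (f : smoothCurve E) : Differentiable ℝ f :=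
  (contDiff f).differentiable (by simp)

/-- Differentiation of smooth curves. -/
noncomputable def derivative : Module.End ℝ (smoothCurve E) where
  toFun f := ⟨deriv f, (contDiff_infty_iff_deriv.1 (contDiff f)).2⟩
  map_add' f g := by
    ext t
    exact deriv_add (differentiable f t) (differentiable g t)
  map_smul' c f := by
    ext t
    exact deriv_const_smul c (differentiable f t)

lemma hasDerivAt (f : smoothCurve E) (t : ℝ) : HasDerivAt f (derivative f t) t :=
  (differentiable f t).hasDerivAt

lemma derivative_eq_of_hasDerivAt {f g : smoothCurve E} (h : ∀ t, HasDerivAt f (g t) t) :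
    derivative f = g :=
  Subtype.ext (funext fun t => (h t).deriv)

/-- Composition of smooth curves with a continuous linear map. -/
def map (L : E →L[ℝ] F) : smoothCurve E →ₗ[ℝ] smoothCurve F where
  toFun f := ⟨fun t => L (f t), L.contDiff.comp (contDiff f)⟩
  map_add' f g := by ext t; exact map_add L _ _
  map_smul' c f := by ext t; exact map_smul L _ _

lemma map_apply (L : E →L[ℝ] F) (f : smoothCurve E) (t : ℝ) : map L f t = L (f t) := rfl

lemma hasDerivAt_clm_apply (L : E →L[ℝ] F) (f : smoothCurve E) (t : ℝ) :
    HasDerivAt (fun s => L (f s)) (L (derivative f t)) t :=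
  L.hasFDerivAt.comp_hasDerivAt t (hasDerivAt f t)

lemma derivative_map (L : E →L[ℝ] F) (f : smoothCurve E) :
    derivative (map L f) = map L (derivative f) :=
  derivative_eq_of_hasDerivAt (hasDerivAt_clm_apply L f)

/-- Multiplication of smooth curves by a scalar smooth function. -/
def mul (χ : smoothCurve ℝ) : Module.End ℝ (smoothCurve E) where
  toFun f := ⟨fun t => χ t • f t, (contDiff χ).smul (contDiff f)⟩
  map_add' f g := by ext t; exact smul_add _ _ _
  map_smul' c f := by ext t; exact smul_comm _ _ _

/-- The smooth curve in a product with given components. -/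
def pi : (ι → smoothCurve E) →ₗ[ℝ] smoothCurve (ι → E) where
  toFun f := ⟨fun t k => f k t, contDiff_pi.2 fun k => contDiff (f k)⟩
  map_add' _ _ := rfl
  map_smul' _ _ := rfl

/-- The smooth curves whose germ at `s` is zero. -/
def vanishingNear (E : Type*) [NormedAddCommGroup E] [NormedSpace ℝ E] (s : ℝ) :
    Submodule ℝ (smoothCurve E) where
  carrier := {f | f =ᶠ[𝓝 s] 0}
  add_mem' {_ _} hf hg := by simpa using Filter.EventuallyEq.add hf hg
  zero_mem' := Filter.EventuallyEq.rfl
  smul_mem' c f hf := by simpa using Filter.EventuallyEq.const_smul hf c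

variable {s : ℝ}

lemma apply_eq_zero_of_mem_vanishingNear {f : smoothCurve E} (hf : f ∈ vanishingNear E s) :
    f s = 0 :=
  Filter.EventuallyEq.eq_of_nhds hf

lemma derivative_mem_vanishingNear {f : smoothCurve E} (hf : f ∈ vanishingNear E s) :
    derivative f ∈ vanishingNear E s := by
  have h : deriv f.1 =ᶠ[𝓝 s] deriv 0 := Filter.EventuallyEq.deriv hf
  rwa [deriv_zero] at h

lemma map_mem_vanishingNear (L : E →L[ℝ] F) {f : smoothCurve E} (hf : f ∈ vanishingNear E s) :
    map L f ∈ vanishingNear F s := by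
  filter_upwards [hf] with t ht
  simp [map, ht]

lemma pi_mem_vanishingNear {f : ι → smoothCurve E} (hf : ∀ k, f k ∈ vanishingNear E s) :
    pi f ∈ vanishingNear (ι → E) s := by
  filter_upwards [Filter.eventually_all.2 hf] with t ht
  exact funext ht

lemma continuous_uncurry_of_linearMap [NormedAddCommGroup X] [NormedSpace ℝ X]
    [FiniteDimensional ℝ X] (V : X →ₗ[ℝ] smoothCurve E) :
    Continuous fun p : X × ℝ => V p.1 p.2 := by
  let b := Module.finBasis ℝ X
  have hV : (fun p : X × ℝ => V p.1 p.2) =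
      fun p => ∑ k, b.equivFunL p.1 k • V (b k) p.2 := by
    funext p
    conv_lhs => rw [← b.sum_repr p.1]
    simp [-Module.Basis.sum_repr]
  have hb : ∀ k, Continuous (V (b k)) := fun k => (contDiff _).continuous
  rw [hV]
  fun_prop

/-- The orbit `t ↦ exp ((t - T) • B) x` of a bounded operator through `x` at time `T`. -/
noncomputable def orbit [CompleteSpace E] (B : E →L[ℝ] E) (T : ℝ) : E →ₗ[ℝ] smoothCurve E where
  toFun x := ⟨fun t => NormedSpace.exp ((t - T) • B) x, by
    have hexp : ContDiff ℝ ∞ (NormedSpace.exp : (E →L[ℝ] E) → E →L[ℝ] E) :=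
      contDiff_iff_contDiffAt.2 fun L => (NormedSpace.exp_analytic (𝕂 := ℝ) L).contDiffAt
    have hlin : ContDiff ℝ ∞ fun t : ℝ => (t - T) • B := by fun_prop
    exact (hexp.comp hlin).clm_apply contDiff_const⟩
  map_add' x y := by ext t; exact map_add _ x y
  map_smul' c x := by ext t; exact map_smul _ c x

lemma orbit_apply_self [CompleteSpace E] (B : E →L[ℝ] E) (T : ℝ) (x : E) :
    orbit B T x T = x := by
  simp [orbit]

lemma derivative_orbit [CompleteSpace E] (B : E →L[ℝ] E) (T : ℝ) (x : E) :
    derivative (orbit B T x) = map B (orbit B T x) :=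
  derivative_eq_of_hasDerivAt fun t => by
    have hexp := (hasDerivAt_exp_smul_const' (𝕂 := ℝ) B (t - T)).scomp t
      ((hasDerivAt_id t).sub_const T)
    simpa [orbit, map] using hexp.clm_apply (hasDerivAt_const t x)

lemma exists_secondOrder_solution [CompleteSpace E] (A : E →L[ℝ] E) (T : ℝ) :
    ∃ U : E × E →ₗ[ℝ] smoothCurve E, ∀ x,
      derivative (derivative (U x)) = map A (U x) ∧
      U x T = x.1 ∧ derivative (U x) T = x.2 := by
  let B : E × E →L[ℝ] E × E := (ContinuousLinearMap.snd ℝ E E).prod (A ∘L .fst ℝ E E)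
  let U : E × E →ₗ[ℝ] smoothCurve E := map (.fst ℝ E E) ∘ₗ orbit B T
  have hU' (x) : derivative (U x) = map (.snd ℝ E E) (orbit B T x) := by
    simp only [U, LinearMap.comp_apply, derivative_map, derivative_orbit]
    rfl
  refine ⟨U, fun x => ⟨?_, ?_, ?_⟩⟩
  · rw [hU', derivative_map, derivative_orbit]
    rfl
  · exact congrArg Prod.fst (orbit_apply_self B T x)
  · rw [hU']
    exact congrArg Prod.snd (orbit_apply_self B T x)

end smoothCurve

/-! ### Chebyshev recurrences and layered equations -/

section Chebyshev

open Polynomial Polynomial.Chebyshev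

variable {R M : Type*} [CommRing R] [AddCommGroup M] [Module R M]

lemma aeval_chebyshevS_recurrence (f : Module.End R M) (n : ℤ) (p : M) :
    f (aeval f (S R n) p) = aeval f (S R (n - 1)) p + aeval f (S R (n + 1)) p := by
  simp [S_add_one]

lemma eq_aeval_chebyshevS_of_recurrence {f : Module.End R M} {w : ℤ → M} {a m : ℤ}
    (hlast : w (m + 1) = 0) (hrec : ∀ i, a < i → i ≤ m → f (w i) = w (i + 1) + w (i - 1))
    {i : ℤ} (hai : a ≤ i) (him : i ≤ m) : w i = aeval f (S R (m - i)) (w m) := by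
  suffices hpair : a ≤ i → w i = aeval f (S R (m - i)) (w m) ∧
      w (i + 1) = aeval f (S R (m - i - 1)) (w m) from (hpair hai).1
  clear hai
  induction i, him using Int.leInductionDown with
  | base => exact fun _ => by simp [hlast]
  | pred i him ih =>
    intro hai
    obtain ⟨hi, hi'⟩ := ih (by lia)
    have hprev : w (i - 1) = f (w i) - w (i + 1) := by
      rw [hrec i (by lia) him, add_sub_cancel_left]
    rw [sub_add_cancel, show m - (i - 1) = m - i + 1 by ring, add_sub_cancel_right]
    refine ⟨?_, hi⟩
    rw [hprev, hi', hi, aeval_chebyshevS_recurrence, add_sub_cancel_left]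

end Chebyshev

section Layers

variable {E : Type*} [NormedAddCommGroup E] [NormedSpace ℝ E] {n : ℤ}

/-- The `i`-th layer of a vector with layers `1, …, n`, extended by zero to all `i : ℤ`. -/
noncomputable def layer (i : ℤ) : (Icc 1 n → E) →L[ℝ] E :=
  if hi : i ∈ Icc 1 n then .proj ⟨i, hi⟩ else 0

lemma layer_apply_of_mem {i : ℤ} (hi : i ∈ Icc 1 n) (x : Icc 1 n → E) :
    layer i x = x ⟨i, hi⟩ := by
  simp only [layer, dif_pos hi, ContinuousLinearMap.proj_apply]

lemma layer_apply_of_notMem {i : ℤ} (hi : i ∉ Icc 1 n) (x : Icc 1 n → E) :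
    layer i x = 0 := by
  simp only [layer, dif_neg hi, zero_apply]

end Layers

namespace smoothCurve

variable {E : Type*} [NormedAddCommGroup E] [NormedSpace ℝ E]

lemma exists_cutoff {s t : ℝ} (hst : s ≠ t) :
    ∃ χ : smoothCurve ℝ, χ =ᶠ[𝓝 s] 0 ∧ χ =ᶠ[𝓝 t] 1 := by
  have hdist : 0 < dist s t := dist_pos.2 hst
  let χ : ContDiffBump t := ⟨dist s t / 3, dist s t / 2, by positivity, by linarith⟩
  refine ⟨⟨χ, χ.contDiff⟩, notMem_tsupport_iff_eventuallyEq.1 ?_, χ.eventuallyEq_one⟩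
  rw [χ.tsupport_eq, Metric.mem_closedBall, not_le]
  exact half_lt_self hdist

lemma mul_mem_vanishingNear {χ : smoothCurve ℝ} {s : ℝ} (hχ : χ =ᶠ[𝓝 s] 0) (f : smoothCurve E) :
    mul χ f ∈ vanishingNear E s := by
  filter_upwards [hχ] with t ht
  simp [mul, ht]

lemma mul_sub_self_mem_vanishingNear {χ : smoothCurve ℝ} {s : ℝ} (hχ : χ =ᶠ[𝓝 s] 1)
    (f : smoothCurve E) : mul χ f - f ∈ vanishingNear E s := by
  filter_upwards [hχ] with t ht
  simp [mul, ht]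

/-- The differential operator `f ↦ c f'' + L f`. -/
noncomputable def waveOp (c : ℝ) (L : E →L[ℝ] E) : Module.End ℝ (smoothCurve E) :=
  c • (derivative * derivative) + map L

lemma waveOp_apply (c : ℝ) (L : E →L[ℝ] E) (f : smoothCurve E) (t : ℝ) :
    waveOp c L f t = c • derivative (derivative f) t + L (f t) :=
  rfl

lemma aeval_waveOp_mem_vanishingNear (c : ℝ) (L : E →L[ℝ] E) (q : Polynomial ℝ)
    {f : smoothCurve E} {s : ℝ} (hf : f ∈ vanishingNear E s) :
    Polynomial.aeval (waveOp c L) q f ∈ vanishingNear E s :=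
  q.aeval_apply_smul_mem_of_le_comap hf _ fun _ hg =>
    add_mem
      (Submodule.smul_mem _ c (derivative_mem_vanishingNear (derivative_mem_vanishingNear hg)))
      (map_mem_vanishingNear L hg)

variable {m : ℤ}

/-- The curve `x` in `Icc 1 m → E` with last layer `p` determined by the layered wave equation
`c xᵢ'' + L xᵢ = xᵢ₊₁ + xᵢ₋₁` for `2 ≤ i ≤ m`. -/
noncomputable def flatCurve (c : ℝ) (L : E →L[ℝ] E) (m : ℤ) :
    smoothCurve E →ₗ[ℝ] smoothCurve (Icc 1 m → E) :=
  pi ∘ₗ LinearMap.pi fun k : Icc 1 m =>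
    Polynomial.aeval (waveOp c L) (Polynomial.Chebyshev.S ℝ (m - k))

lemma map_layer_flatCurve (c : ℝ) (L : E →L[ℝ] E) (p : smoothCurve E) {i : ℤ}
    (hi : 1 ≤ i) (him : i ≤ m + 1) :
    map (layer i) (flatCurve c L m p) =
      Polynomial.aeval (waveOp c L) (Polynomial.Chebyshev.S ℝ (m - i)) p := by
  rcases him.lt_or_eq with him | rfl
  · ext t
    exact layer_apply_of_mem ⟨hi, by lia⟩ _
  · rw [sub_add_cancel_left, Polynomial.Chebyshev.S_neg_one, map_zero]
    ext t
    exact layer_apply_of_notMem (by simp) _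

lemma waveOp_map_layer_flatCurve (c : ℝ) (L : E →L[ℝ] E) (p : smoothCurve E) {i : ℤ}
    (hi : 2 ≤ i) (him : i ≤ m) :
    waveOp c L (map (layer i) (flatCurve c L m p)) =
      map (layer (i + 1)) (flatCurve c L m p) + map (layer (i - 1)) (flatCurve c L m p) := by
  rw [map_layer_flatCurve (m := m) c L p (i := i) (by lia) (by lia),
    map_layer_flatCurve (m := m) c L p (i := i + 1) (by lia) (by lia),
    map_layer_flatCurve (m := m) c L p (i := i - 1) (by lia) (by lia), aeval_chebyshevS_recurrence]
  rw [show m - (i + 1) = m - i - 1 by ring, show m - (i - 1) = m - i + 1 by ring]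

lemma flatCurve_mem_vanishingNear (c : ℝ) (L : E →L[ℝ] E) {p : smoothCurve E} {s : ℝ}
    (hp : p ∈ vanishingNear E s) : flatCurve c L m p ∈ vanishingNear (Icc 1 m → E) s :=
  pi_mem_vanishingNear fun _ => aeval_waveOp_mem_vanishingNear c L _ hp

lemma flatCurve_map_layer_last {c : ℝ} {L : E →L[ℝ] E} {x : smoothCurve (Icc 1 m → E)}
    (hx : ∀ i, 2 ≤ i → i ≤ m →
      waveOp c L (map (layer i) x) = map (layer (i + 1)) x + map (layer (i - 1)) x) :
    flatCurve c L m (map (layer m) x) = x := by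
  have hlast : map (layer (m + 1)) x = 0 := by
    ext t
    exact layer_apply_of_notMem (by simp) _
  ext t k
  have hk := eq_aeval_chebyshevS_of_recurrence (w := fun i => map (layer i) x) hlast
    (fun i hi him => hx i hi him) k.2.1 k.2.2
  exact (congrArg (fun f : smoothCurve E => f t) hk).symm.trans (layer_apply_of_mem k.2 _)

lemma exists_free_layered_solution [CompleteSpace E] {c : ℝ} (hc : c ≠ 0) (L : E →L[ℝ] E) (T : ℝ) :
    ∃ U : (Icc 1 m → E) × (Icc 1 m → E) →ₗ[ℝ] smoothCurve (Icc 1 m → E), ∀ x,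
      (∀ i ∈ Icc 1 m, waveOp c L (map (layer i) (U x)) =
        map (layer (i + 1)) (U x) + map (layer (i - 1)) (U x)) ∧
      U x T = x.1 ∧ derivative (U x) T = x.2 := by
  let A : (Icc 1 m → E) →L[ℝ] (Icc 1 m → E) := .pi fun k =>
    c⁻¹ • (layer (k + 1) + layer (k - 1) - L ∘L layer k)
  obtain ⟨U, hU⟩ := exists_secondOrder_solution A T
  refine ⟨U, fun x => ⟨fun i hi => ?_, (hU x).2⟩⟩
  ext t
  have hlayer : layer i (A (U x t)) =
      c⁻¹ • (layer (i + 1) (U x t) + layer (i - 1) (U x t) - L (layer i (U x t))) :=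
    layer_apply_of_mem hi _
  calc waveOp c L (map (layer i) (U x)) t
      = c • layer i (A (U x t)) + L (layer i (U x t)) := by
        rw [waveOp_apply, derivative_map, derivative_map, (hU x).1]
        rfl
    _ = layer (i + 1) (U x t) + layer (i - 1) (U x t) := by
        rw [hlayer, smul_inv_smul₀ hc, sub_add_cancel]

theorem exists_layered_steering [CompleteSpace E] {c : ℝ} (hc : c ≠ 0) (L : E →L[ℝ] E)
    {t₀ t₁ : ℝ} (ht : t₀ ≠ t₁) :
    ∃ V : (Icc 1 m → E) × (Icc 1 m → E) →ₗ[ℝ] smoothCurve (Icc 1 m → E), ∀ x,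
      (∀ i, 2 ≤ i → i ≤ m → waveOp c L (map (layer i) (V x)) =
        map (layer (i + 1)) (V x) + map (layer (i - 1)) (V x)) ∧
      V x t₀ = 0 ∧ derivative (V x) t₀ = 0 ∧ V x t₁ = x.1 ∧ derivative (V x) t₁ = x.2 := by
  obtain ⟨U, hU⟩ := exists_free_layered_solution (m := m) hc L t₁
  obtain ⟨χ, hχ₀, hχ₁⟩ := exists_cutoff ht
  let V := flatCurve c L m ∘ₗ mul χ ∘ₗ map (layer m) ∘ₗ U
  have hV₀ (x) : V x ∈ vanishingNear _ t₀ :=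
    flatCurve_mem_vanishingNear c L (mul_mem_vanishingNear hχ₀ _)
  have hV₁ (x) : V x - U x ∈ vanishingNear _ t₁ := by
    have hU_flat : flatCurve c L m (map (layer m) (U x)) = U x :=
      flatCurve_map_layer_last fun i hi him => (hU x).1 i ⟨by lia, him⟩
    nth_rewrite 1 [← hU_flat]
    simp only [V, LinearMap.comp_apply, ← map_sub]
    exact flatCurve_mem_vanishingNear c L (mul_sub_self_mem_vanishingNear hχ₁ _)
  refine ⟨V, fun x => ⟨fun i hi him => waveOp_map_layer_flatCurve c L _ hi him,
    apply_eq_zero_of_mem_vanishingNear (hV₀ x),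
    apply_eq_zero_of_mem_vanishingNear (derivative_mem_vanishingNear (hV₀ x)), ?_, ?_⟩⟩
  · rw [← (hU x).2.1]
    exact sub_eq_zero.1 (apply_eq_zero_of_mem_vanishingNear (hV₁ x))
  · have hderiv := apply_eq_zero_of_mem_vanishingNear (derivative_mem_vanishingNear (hV₁ x))
    rw [map_sub] at hderiv
    rw [← (hU x).2.2]
    exact sub_eq_zero.1 hderiv

end smoothCurve

/-! ### The small root of a quadratic -/

section SmallRoot

/-- The root of `a x² + b x + c` that tends to `0` with `c`, for `b ≠ 0`. The form chosen, with the
square root in the denominator, has no singularity at `a = 0`. -/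
noncomputable def smallRoot (a b c : ℝ) : ℝ :=
  -(2 * c / b) / (1 + √(discrim a b c / b ^ 2))

lemma smallRoot_zero (a b : ℝ) : smallRoot a b 0 = 0 := by
  simp [smallRoot]

lemma smallRoot_isRoot {a b c : ℝ} (hb : b ≠ 0) (hdisc : 0 ≤ discrim a b c) :
    a * smallRoot a b c ^ 2 + b * smallRoot a b c + c = 0 := by
  have hden : 1 + √(discrim a b c / b ^ 2) ≠ 0 := by positivity
  have hsq : √(discrim a b c / b ^ 2) ^ 2 * b ^ 2 = b ^ 2 - 4 * a * c := by
    rw [Real.sq_sqrt (by positivity), div_mul_cancel₀ _ (pow_ne_zero 2 hb), discrim]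
  rw [smallRoot]
  field_simp
  linear_combination c * hsq

lemma contDiffOn_smallRoot {E : Type*} [NormedAddCommGroup E] [NormedSpace ℝ E]
    {n : WithTop ℕ∞} {a b c : E → ℝ} {s : Set E} (ha : ContDiffOn ℝ n a s)
    (hb : ContDiffOn ℝ n b s) (hc : ContDiffOn ℝ n c s) (hb₀ : ∀ x ∈ s, b x ≠ 0)
    (hdisc : ∀ x ∈ s, 0 < discrim (a x) (b x) (c x)) :
    ContDiffOn ℝ n (fun x => smallRoot (a x) (b x) (c x)) s := by
  have hquot : ContDiffOn ℝ n (fun x => discrim (a x) (b x) (c x) / b x ^ 2) s :=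
    ((hb.pow 2).sub ((contDiffOn_const.mul ha).mul hc)).div (hb.pow 2)
      fun x hx => pow_ne_zero 2 (hb₀ x hx)
  have hquot_ne (x) (hx : x ∈ s) : discrim (a x) (b x) (c x) / b x ^ 2 ≠ 0 :=
    div_ne_zero (hdisc x hx).ne' (pow_ne_zero 2 (hb₀ x hx))
  exact ((contDiffOn_const.mul hc).div hb hb₀).neg.div
    (contDiffOn_const.add (hquot.sqrt hquot_ne)) fun x _ => by positivity

end SmallRoot

/-! ### The deformation absorbing a defect -/

section Deformation

/-- The deformation `λ` for which the first row of `A(λ)` differs by the defect `-g` from that of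
the Laplacian (in units of `h⁻²`), where `p = (g, u, v)` and `u`, `v` are the values of the state
at the first two nodes `(1, j)`, `(2, j)`. The quadratic comes from clearing denominators in
`2 (1 + 1 / (1 + λ)) u - 2 / (2 + λ) v = 4 u - v - g`. -/
noncomputable def deformation (p : ℝ × ℝ × ℝ) : ℝ :=
  smallRoot (p.1 - 2 * p.2.1 + p.2.2) (3 * p.1 + p.2.2 - 4 * p.2.1) (2 * p.1)

/-- The domain on which `deformation` is a smooth solution of its defining equation. -/
def deformationDomain : Set (ℝ × ℝ × ℝ) :=
  {p | 3 * p.1 + p.2.2 - 4 * p.2.1 ≠ 0 ∧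
    0 < discrim (p.1 - 2 * p.2.1 + p.2.2) (3 * p.1 + p.2.2 - 4 * p.2.1) (2 * p.1)}

lemma isOpen_deformationDomain : IsOpen deformationDomain := by
  have hdisc : Continuous fun p : ℝ × ℝ × ℝ =>
      discrim (p.1 - 2 * p.2.1 + p.2.2) (3 * p.1 + p.2.2 - 4 * p.2.1) (2 * p.1) := by
    unfold discrim
    fun_prop
  exact (isOpen_ne_fun (by fun_prop) continuous_const).inter (isOpen_lt continuous_const hdisc)

lemma contDiffOn_deformation {n : WithTop ℕ∞} :
    ContDiffOn ℝ n deformation deformationDomain :=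
  contDiffOn_smallRoot (by fun_prop) (by fun_prop) (by fun_prop) (fun _ hp => hp.out.1)
    fun _ hp => hp.out.2

lemma mem_deformationDomain_of_defect_eq_zero {u v : ℝ} (h : v - 4 * u ≠ 0) :
    ((0, u, v) : ℝ × ℝ × ℝ) ∈ deformationDomain := by
  have hsq : 0 < (v - 4 * u) ^ 2 := by positivity
  exact Set.mem_ofPred.2 ⟨by simpa using h, by simpa [discrim] using hsq⟩

lemma deformation_of_defect_eq_zero (u v : ℝ) : deformation (0, u, v) = 0 := by
  simp [deformation, smallRoot_zero]

lemma deformation_spec {g u v : ℝ} (hp : (g, u, v) ∈ deformationDomain)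
    (hlam : |deformation (g, u, v)| < 1) :
    2 * (1 + 1 / (1 + deformation (g, u, v))) * u - 2 / (2 + deformation (g, u, v)) * v =
      4 * u - v - g := by
  have hroot := smallRoot_isRoot hp.out.1 hp.out.2.le
  change _ * deformation (g, u, v) ^ 2 + _ * deformation (g, u, v) + _ = 0 at hroot
  generalize deformation (g, u, v) = lam at hroot hlam ⊢
  have h₁ : 1 + lam ≠ 0 := by linarith [neg_lt_of_abs_lt hlam]
  have h₂ : 2 + lam ≠ 0 := by linarith [neg_lt_of_abs_lt hlam]
  field_simp
  linear_combination hroot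

lemma pertOp_one_eq_discLap_sub {h : ℝ} {lam : ℤ → ℝ} {X : ℤ → ℤ → ℝ} {j : ℤ} {g : ℝ}
    (hX : X 0 j = 0) (hp : (g, X 1 j, X 2 j) ∈ deformationDomain)
    (hlam : lam j = deformation (g, X 1 j, X 2 j)) (hlt : |lam j| < 1) :
    pertOp h lam X 1 j = discLap h X 1 j - 1 / h ^ 2 * g := by
  have hspec := deformation_spec hp (hlam ▸ hlt)
  rw [← hlam] at hspec
  simp only [pertOp, discLap, if_pos, one_add_one_eq_two, sub_self, hX]
  linear_combination 1 / h ^ 2 * hspec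

end Deformation

/-! ### Small perturbations of a curve of zeros -/

section Perturbation

lemma eventually_forall_mem_of_continuousOn {X Y Z : Type*} [TopologicalSpace X]
    [TopologicalSpace Y] [TopologicalSpace Z] {K : Set Y} (hK : IsCompact K) {f : X × Y → Z}
    (hf : ContinuousOn f (univ ×ˢ K)) {U : Set Z} (hU : IsOpen U) {x₀ : X}
    (hx₀ : ∀ y ∈ K, f (x₀, y) ∈ U) : ∀ᶠ x in 𝓝 x₀, ∀ y ∈ K, f (x, y) ∈ U := by
  have hlocal : ∀ y ∈ K, ∀ᶠ q : X × Y in 𝓝 (x₀, y), q.2 ∈ K → f q ∈ U := fun y hy =>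
    (eventually_nhdsWithin_iff.1
      ((hf (x₀, y) ⟨mem_univ _, hy⟩).eventually (hU.mem_nhds (hx₀ y hy)))).mono
      fun q hq hqK => hq ⟨mem_univ _, hqK⟩
  filter_upwards [hK.eventually_forall_of_forall_eventually (P := fun x y => y ∈ K → f (x, y) ∈ U)
    hlocal] with x hx y hy using hx y hy hy

variable {P Q : Type*} [NormedAddCommGroup P] [NormedSpace ℝ P] [NormedAddCommGroup Q]
  [NormedSpace ℝ Q] {Λ : P → Q} {O : Set P}

lemma continuousOn_fderiv_apply (hO : IsOpen O) (hΛ : ContDiffOn ℝ 1 Λ O) :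
    ContinuousOn (fun q : P × P => fderiv ℝ Λ q.1 q.2) (O ×ˢ univ) :=
  ((hΛ.continuousOn_fderiv_of_isOpen hO le_rfl).comp continuousOn_fst fun _ hq => hq.1).clm_apply
    continuousOn_snd

lemma isOpen_setOf_norm_lt_and_norm_fderiv_lt (hO : IsOpen O) (hΛ : ContDiffOn ℝ 1 Λ O) (ε : ℝ) :
    IsOpen {q : P × P | q.1 ∈ O ∧ ‖Λ q.1‖ < ε ∧ ‖fderiv ℝ Λ q.1 q.2‖ < ε} := by
  have hcont : ContinuousOn (fun q : P × P => (‖Λ q.1‖, ‖fderiv ℝ Λ q.1 q.2‖)) (O ×ˢ univ) :=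
    (hΛ.continuousOn.comp continuousOn_fst fun _ hq => hq.1).norm.prodMk
      (continuousOn_fderiv_apply hO hΛ).norm
  convert hcont.isOpen_inter_preimage (hO.prod isOpen_univ)
    ((isOpen_Iio (a := ε)).prod (isOpen_Iio (a := ε))) using 1
  ext q
  simp

variable {X : Type*} [NormedAddCommGroup X] [NormedSpace ℝ X] [FiniteDimensional ℝ X]

theorem eventually_small_along_perturbed_curve (hO : IsOpen O) (hΛ : ContDiffOn ℝ 1 Λ O)
    {K : Set ℝ} (hK : IsCompact K) (hK' : UniqueDiffOn ℝ K) {c c' : ℝ → P}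
    (hc : ∀ t ∈ K, HasDerivWithinAt c (c' t) K t) (hc' : ContinuousOn c' K)
    (hcO : ∀ t ∈ K, c t ∈ O) (hc₀ : ∀ t ∈ K, Λ (c t) = 0) (G : X →ₗ[ℝ] smoothCurve P)
    {ε : ℝ} (hε : 0 < ε) :
    ∀ᶠ x in 𝓝 (0 : X), ∃ l' : ℝ → Q,
      (∀ t ∈ K, HasDerivWithinAt (fun s => Λ (c s + G x s)) (l' t) K t) ∧ ContinuousOn l' K ∧
      ∀ t ∈ K, c t + G x t ∈ O ∧ ‖Λ (c t + G x t)‖ < ε ∧ ‖l' t‖ < ε := by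
  let γ : X × ℝ → P × P := fun q =>
    (c q.2 + G q.1 q.2, c' q.2 + smoothCurve.derivative (G q.1) q.2)
  have hγ : ContinuousOn γ (univ ×ˢ K) :=
    (((HasDerivWithinAt.continuousOn hc).comp continuousOn_snd fun _ hq => hq.2).add
      (smoothCurve.continuous_uncurry_of_linearMap G).continuousOn).prodMk
    ((hc'.comp continuousOn_snd fun _ hq => hq.2).add
      (smoothCurve.continuous_uncurry_of_linearMap (smoothCurve.derivative ∘ₗ G)).continuousOn)
  have hderiv {f : ℝ → P} {f' : P} {t : ℝ} (hf : HasDerivWithinAt f f' K t) (hft : f t ∈ O) :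
      HasDerivWithinAt (fun s => Λ (f s)) (fderiv ℝ Λ (f t) f') K t :=
    ((hΛ.differentiableOn (by simp)).differentiableAt
      (hO.mem_nhds hft)).hasFDerivAt.comp_hasDerivWithinAt t hf
  have hderiv_zero (t) (ht : t ∈ K) : fderiv ℝ Λ (c t) (c' t) = 0 :=
    (hK' t ht).eq_deriv _ (hderiv (hc t ht) (hcO t ht))
      ((hasDerivWithinAt_const t K 0).congr hc₀ (hc₀ t ht))
  filter_upwards [eventually_forall_mem_of_continuousOn hK hγ
    (isOpen_setOf_norm_lt_and_norm_fderiv_lt hO hΛ ε)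
    fun t ht => Set.mem_ofPred.2 (by simp [γ, hcO t ht, hc₀ t ht, hderiv_zero t ht, hε])] with x hx
  refine ⟨fun t => fderiv ℝ Λ (γ (x, t)).1 (γ (x, t)).2, fun t ht => ?_, ?_, fun t ht => hx t ht⟩
  · exact hderiv ((hc t ht).add (smoothCurve.hasDerivAt (G x) t).hasDerivWithinAt) (hx t ht).1
  · exact (continuousOn_fderiv_apply hO hΛ).comp (hγ.comp (by fun_prop)
      fun t ht => ⟨mem_univ _, ht⟩) fun t ht => ⟨(hx t ht).1, mem_univ _⟩

end Perturbation

/-! ### Steering the grid from the first row -/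

section Grid

/-- The grid functions vanishing on the boundary, as families of values at the interior nodes
grouped by first index. -/
abbrev InteriorValues (M N : ℤ) : Type := Icc 1 (M - 1) → Icc 1 (N - 1) → ℝ

/-- Evaluation at `(i, j)` of the extension by zero of a family of interior values. -/
noncomputable def gridEval (M N i j : ℤ) : InteriorValues M N →L[ℝ] ℝ :=
  layer j ∘L layer i

variable {M N i j : ℤ} {h : ℝ}

lemma gridEval_of_isInterior (hij : isInterior M N i j) (x : InteriorValues M N) :
    gridEval M N i j x = x ⟨i, hij.1, hij.2.1⟩ ⟨j, hij.2.2⟩ := by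
  simp only [gridEval, ContinuousLinearMap.comp_apply,
    layer_apply_of_mem (show i ∈ Icc 1 (M - 1) from ⟨hij.1, hij.2.1⟩), layer_apply_of_mem hij.2.2]

lemma gridEval_of_not_isInterior (hij : ¬ isInterior M N i j) (x : InteriorValues M N) :
    gridEval M N i j x = 0 := by
  by_cases hi : i ∈ Icc 1 (M - 1)
  · exact layer_apply_of_notMem (fun hj => hij ⟨hi.1, hi.2, hj⟩) _
  · rw [gridEval, ContinuousLinearMap.comp_apply, layer_apply_of_notMem hi, map_zero]

/-- The discrete Laplacian at `(i, j)` of the extension by zero of a family of interior values. -/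
noncomputable def gridLap (M N : ℤ) (h : ℝ) (i j : ℤ) : InteriorValues M N →L[ℝ] ℝ :=
  (1 / h ^ 2) • (4 • gridEval M N i j - gridEval M N (i + 1) j - gridEval M N (i - 1) j -
    gridEval M N i (j + 1) - gridEval M N i (j - 1))

lemma discLap_add_gridEval (X : ℤ → ℤ → ℝ) (x : InteriorValues M N) :
    discLap h (fun i j => X i j + gridEval M N i j x) i j =
      discLap h X i j + gridLap M N h i j x := by
  simp [discLap, gridLap]
  ring

/-- The part of the discrete Laplacian (in units of `h⁻²`) acting inside a row of fixed `i`. -/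
noncomputable def rowOp (n : ℤ) : (Icc 1 n → ℝ) →L[ℝ] (Icc 1 n → ℝ) :=
  .pi fun k => 4 • layer k - layer (k + 1) - layer (k - 1)

lemma sq_mul_gridLap (hh : h ≠ 0) (hij : isInterior M N i j) (x : InteriorValues M N) :
    h ^ 2 * gridLap M N h i j x = layer j (rowOp (N - 1) (layer i x)) -
      (gridEval M N (i + 1) j x + gridEval M N (i - 1) j x) := by
  rw [layer_apply_of_mem hij.2.2]
  simp [gridLap, gridEval, rowOp, hh]
  ring

open smoothCurve

theorem exists_grid_steering (M N : ℤ) (hh : h ≠ 0) {t₀ t₁ : ℝ} (ht : t₀ ≠ t₁) :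
    ∃ V : InteriorValues M N × InteriorValues M N →ₗ[ℝ] smoothCurve (InteriorValues M N), ∀ x,
      (∀ t i j, isInterior M N i j → i ≠ 1 → gridEval M N i j (derivative (derivative (V x)) t) =
        -gridLap M N h i j (V x t)) ∧
      V x t₀ = 0 ∧ derivative (V x) t₀ = 0 ∧ V x t₁ = x.1 ∧ derivative (V x) t₁ = x.2 := by
  obtain ⟨V, hV⟩ := exists_layered_steering (m := M - 1) (pow_ne_zero 2 hh) (rowOp (N - 1)) ht
  refine ⟨V, fun x => ⟨fun t i j hij hi => ?_, (hV x).2⟩⟩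
  have hrow := congrArg (fun f : smoothCurve (Icc 1 (N - 1) → ℝ) => layer j (f t))
    ((hV x).1 i (by have := hij.1; lia) hij.2.1)
  have hrow' : h ^ 2 * gridEval M N i j (derivative (derivative (V x)) t) +
      layer j (rowOp (N - 1) (layer i (V x t))) =
      gridEval M N (i + 1) j (V x t) + gridEval M N (i - 1) j (V x t) := by
    simpa [waveOp_apply, derivative_map, map_apply, gridEval] using hrow
  apply mul_left_cancel₀ (pow_ne_zero 2 hh)
  rw [mul_neg, sq_mul_gridLap hh hij]
  linear_combination hrow'

end Grid

/-! ### Exact controllability -/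

section Controllability

open smoothCurve

/-- The input of `deformation` at the first two nodes of column `j` along a curve `f` of interior
values; the defect is `h² (f'' + A f)(1, j)`. -/
noncomputable def columnCurve (M N : ℤ) (h : ℝ) (j : ℤ) :
    smoothCurve (InteriorValues M N) →ₗ[ℝ] smoothCurve (ℝ × ℝ × ℝ) where
  toFun f := ⟨fun t => (h ^ 2 * (gridEval M N 1 j (derivative (derivative f) t) +
      gridLap M N h 1 j (f t)), gridEval M N 1 j (f t), gridEval M N 2 j (f t)), by
    have hf := contDiff f
    have hf' := contDiff (derivative (derivative f))
    change ContDiff ℝ ∞ _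
    fun_prop⟩
  map_add' f g := by
    ext t <;> simp
    ring
  map_smul' c f := by
    ext t <;> simp
    ring

variable {M N : ℤ} {h T : ℝ} {F y y' : ℝ → ℤ → ℤ → ℝ}

lemma onGrid_of_isInterior {i j : ℤ} (hij : isInterior M N i j) : onGrid M N i j := by
  unfold isInterior onGrid at *
  lia

lemma onGrid_add_one_left {i j : ℤ} (hij : isInterior M N i j) : onGrid M N (i + 1) j := by
  unfold isInterior onGrid at *
  lia

lemma onBoundary_zero_left {i j : ℤ} (hij : isInterior M N i j) : onBoundary M N 0 j := by
  unfold onBoundary isInterior onGrid at *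
  lia

lemma continuousOn_velocity (hT : 0 < T)
    (hbd : ∀ t ∈ Icc (0 : ℝ) T, ∀ i j, onBoundary M N i j → y t i j = 0)
    (hder : ∀ t ∈ Icc (0 : ℝ) T, ∀ i j,
      HasDerivWithinAt (fun s => y s i j) (y' t i j) (Icc (0 : ℝ) T) t)
    (hode : ∀ t ∈ Icc (0 : ℝ) T, ∀ i j, isInterior M N i j →
      HasDerivWithinAt (fun s => y' s i j) (F t i j - discLap h (y t) i j) (Icc (0 : ℝ) T) t)
    {i j : ℤ} (hij : onGrid M N i j) : ContinuousOn (fun t => y' t i j) (Icc (0 : ℝ) T) := by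
  by_cases hint : isInterior M N i j
  · exact HasDerivWithinAt.continuousOn fun t ht => hode t ht i j hint
  · have hzero (t) (ht : t ∈ Icc (0 : ℝ) T) : y t i j = 0 := hbd t ht i j ⟨hij, hint⟩
    refine (continuousOn_const (c := (0 : ℝ))).congr fun t ht => ?_
    exact (uniqueDiffOn_Icc hT t ht).eq_deriv _ (hder t ht i j)
      ((hasDerivWithinAt_const t _ 0).congr hzero (hzero t ht))

lemma eventually_exists_column_deformation {X : Type*} [NormedAddCommGroup X] [NormedSpace ℝ X]
    [FiniteDimensional ℝ X] (hh : h ≠ 0) {K : Set ℝ} (hK : IsCompact K) (hK' : UniqueDiffOn ℝ K)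
    {j : ℤ} (hy₀ : ∀ t ∈ K, y t 0 j = 0)
    (hder : ∀ t ∈ K, ∀ i, HasDerivWithinAt (fun s => y s i j) (y' t i j) K t)
    (hcont₁ : ContinuousOn (fun t => y' t 1 j) K) (hcont₂ : ContinuousOn (fun t => y' t 2 j) K)
    (hnd : ∀ t ∈ K, y t 2 j - 4 * y t 1 j ≠ 0)
    (V : X →ₗ[ℝ] smoothCurve (InteriorValues M N)) {ε : ℝ} (hε : 0 < ε) :
    ∀ᶠ x in 𝓝 (0 : X), ∃ l l' : ℝ → ℝ,
      (∀ t ∈ K, HasDerivWithinAt l (l' t) K t) ∧ ContinuousOn l' K ∧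
      ∀ t ∈ K, |l t| < ε ∧ |l' t| < ε ∧ ∀ lam : ℤ → ℝ, lam j = l t →
        pertOp h lam (fun i j => y t i j + gridEval M N i j (V x t)) 1 j =
          discLap h (y t) 1 j - gridEval M N 1 j (derivative (derivative (V x)) t) := by
  let c : ℝ → ℝ × ℝ × ℝ := fun t => (0, y t 1 j, y t 2 j)
  let c' : ℝ → ℝ × ℝ × ℝ := fun t => (0, y' t 1 j, y' t 2 j)
  have hc (t) (ht : t ∈ K) : HasDerivWithinAt c (c' t) K t :=
    (hasDerivWithinAt_const t K 0).prodMk ((hder t ht 1).prodMk (hder t ht 2))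
  have hc' : ContinuousOn c' K := continuousOn_const.prodMk (hcont₁.prodMk hcont₂)
  filter_upwards [eventually_small_along_perturbed_curve isOpen_deformationDomain
    contDiffOn_deformation hK hK' hc hc'
    (fun t ht => mem_deformationDomain_of_defect_eq_zero (hnd t ht))
    (fun t _ => deformation_of_defect_eq_zero _ _) (columnCurve M N h j ∘ₗ V)
    (lt_min hε one_pos)] with x ⟨l', hl, hl', hsmall⟩
  refine ⟨_, l', hl, hl', fun t ht => ?_⟩
  obtain ⟨hmem, hl_lt, hl'_lt⟩ := hsmall t ht
  rw [Real.norm_eq_abs, lt_min_iff] at hl_lt hl'_lt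
  refine ⟨hl_lt.1, hl'_lt.1, fun lam hlam => ?_⟩
  let g := h ^ 2 * (gridEval M N 1 j (derivative (derivative (V x)) t) + gridLap M N h 1 j (V x t))
  have hpoint : c t + (columnCurve M N h j ∘ₗ V) x t =
      (g, y t 1 j + gridEval M N 1 j (V x t), y t 2 j + gridEval M N 2 j (V x t)) :=
    Prod.ext (zero_add g) rfl
  rw [hpoint] at hmem hl_lt hlam
  have hX₀ : y t 0 j + gridEval M N 0 j (V x t) = 0 := by
    rw [hy₀ t ht, gridEval_of_not_isInterior fun h₀ => absurd h₀.1 (by norm_num), add_zero]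
  rw [pertOp_one_eq_discLap_sub hX₀ hmem hlam (hlam ▸ hl_lt.2), discLap_add_gridEval]
  simp only [g]
  field_simp
  ring

lemma norm_interiorValues_lt {Z W : ℤ → ℤ → ℝ} {δ : ℝ} (hδ : 0 < δ)
    (hZW : ∀ i j, isInterior M N i j → |Z i j| + |W i j| < δ) :
    ‖((fun i j => Z i j, fun i j => W i j) : InteriorValues M N × InteriorValues M N)‖ < δ := by
  simp only [Prod.norm_mk, max_lt_iff, pi_norm_lt_iff hδ, Real.norm_eq_abs]
  have hnode (i : Icc 1 (M - 1)) (j : Icc 1 (N - 1)) : |Z i j| + |W i j| < δ :=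
    hZW i j ⟨i.2.1, i.2.2, j.2⟩
  exact ⟨fun i j => lt_of_le_of_lt (le_add_of_nonneg_right (abs_nonneg _)) (hnode i j),
    fun i j => lt_of_le_of_lt (le_add_of_nonneg_left (abs_nonneg _)) (hnode i j)⟩

theorem eventually_exists_deformation {X : Type*} [NormedAddCommGroup X] [NormedSpace ℝ X]
    [FiniteDimensional ℝ X] (hh : h ≠ 0) (hT : 0 < T)
    (hbd : ∀ t ∈ Icc (0 : ℝ) T, ∀ i j, onBoundary M N i j → y t i j = 0)
    (hder : ∀ t ∈ Icc (0 : ℝ) T, ∀ i j,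
      HasDerivWithinAt (fun s => y s i j) (y' t i j) (Icc (0 : ℝ) T) t)
    (hode : ∀ t ∈ Icc (0 : ℝ) T, ∀ i j, isInterior M N i j →
      HasDerivWithinAt (fun s => y' s i j) (F t i j - discLap h (y t) i j) (Icc (0 : ℝ) T) t)
    (hnd : ∀ t ∈ Icc (0 : ℝ) T, ∀ j : ℤ, 1 ≤ j → j ≤ N - 1 →
      (1 / 2) * y t 2 j - 2 * y t 1 j ≠ 0)
    (V : X →ₗ[ℝ] smoothCurve (InteriorValues M N)) {ε : ℝ} (hε : 0 < ε) :
    ∀ᶠ x in 𝓝 (0 : X), ∃ lam lam' : ℝ → ℤ → ℝ,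
      (∀ t ∈ Icc (0 : ℝ) T, ∀ j,
        HasDerivWithinAt (fun s => lam s j) (lam' t j) (Icc (0 : ℝ) T) t) ∧
      (∀ j, ContinuousOn (fun t => lam' t j) (Icc (0 : ℝ) T)) ∧
      (∀ t ∈ Icc (0 : ℝ) T, ∀ j, |lam t j| < ε ∧ |lam' t j| < ε) ∧
      ∀ t ∈ Icc (0 : ℝ) T, ∀ j, isInterior M N 1 j →
        pertOp h (lam t) (fun i j => y t i j + gridEval M N i j (V x t)) 1 j =
          discLap h (y t) 1 j - gridEval M N 1 j (derivative (derivative (V x)) t) := by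
  classical
  have hcolumns := (Filter.eventually_all_finite
    ((finite_Icc 1 (N - 1)).subset fun j (hj : isInterior M N 1 j) => hj.2.2)).2
    fun j (hj : isInterior M N 1 j) =>
      eventually_exists_column_deformation hh isCompact_Icc (uniqueDiffOn_Icc hT)
        (fun t ht => hbd t ht 0 j (onBoundary_zero_left hj))
        (fun t ht i => hder t ht i j)
        (continuousOn_velocity hT hbd hder hode (onGrid_of_isInterior hj))
        (continuousOn_velocity hT hbd hder hode (onGrid_add_one_left hj))
        (fun t ht h₀ => hnd t ht j hj.2.2.1 hj.2.2.2 (by linear_combination h₀ / 2)) V hε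
  filter_upwards [hcolumns] with x hx
  choose! l l' hl hl' hl_spec using hx
  refine ⟨fun t j => if isInterior M N 1 j then l j t else 0,
    fun t j => if isInterior M N 1 j then l' j t else 0, fun t ht j => ?_, fun j => ?_,
    fun t ht j => ?_, fun t ht j hj => (hl_spec j hj t ht).2.2 _ (if_pos hj)⟩
  all_goals by_cases hj : isInterior M N 1 j <;> simp only [hj, if_true, if_false]
  · exact hl j hj t ht
  · exact hasDerivWithinAt_const t _ 0
  · exact hl' j hj
  · exact continuousOn_const
  · exact ⟨(hl_spec j hj t ht).1, (hl_spec j hj t ht).2.1⟩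
  · simpa using hε

theorem stmt14_general (M N : ℤ) (hh : h ≠ 0) (hT : 0 < T)
    (hbd : ∀ t ∈ Icc (0 : ℝ) T, ∀ i j, onBoundary M N i j → y t i j = 0)
    (hder : ∀ t ∈ Icc (0 : ℝ) T, ∀ i j,
      HasDerivWithinAt (fun s => y s i j) (y' t i j) (Icc (0 : ℝ) T) t)
    (hode : ∀ t ∈ Icc (0 : ℝ) T, ∀ i j, isInterior M N i j →
      HasDerivWithinAt (fun s => y' s i j) (F t i j - discLap h (y t) i j) (Icc (0 : ℝ) T) t)
    (hnd : ∀ t ∈ Icc (0 : ℝ) T, ∀ j : ℤ, 1 ≤ j → j ≤ N - 1 →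
      (1 / 2) * y t 2 j - 2 * y t 1 j ≠ 0) {ε κ : ℝ} (hε : 0 < ε) (hκ : 0 < κ) :
    ∃ δ > (0 : ℝ), ∀ Z W : ℤ → ℤ → ℝ,
      (∀ i j, isInterior M N i j → |Z i j - y T i j| + |W i j - y' T i j| < δ) →
      ∃ lam lam' : ℝ → ℤ → ℝ,
        (∀ t ∈ Icc (0 : ℝ) T, ∀ j,
          HasDerivWithinAt (fun s => lam s j) (lam' t j) (Icc (0 : ℝ) T) t) ∧
        (∀ j, ContinuousOn (fun t => lam' t j) (Icc (0 : ℝ) T)) ∧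
        (∀ t ∈ Icc (0 : ℝ) T, ∀ j, |lam t j| ≤ ε) ∧
        (∀ t ∈ Icc (0 : ℝ) T, ∀ j, |lam' t j| < κ) ∧
        ∃ u u' : ℝ → ℤ → ℤ → ℝ,
          (∀ t ∈ Icc (0 : ℝ) T, ∀ i j, onBoundary M N i j → u t i j = 0) ∧
          (∀ t ∈ Icc (0 : ℝ) T, ∀ i j,
            HasDerivWithinAt (fun s => u s i j) (u' t i j) (Icc (0 : ℝ) T) t) ∧
          (∀ t ∈ Icc (0 : ℝ) T, ∀ i j, isInterior M N i j →
            HasDerivWithinAt (fun s => u' s i j)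
              (F t i j - pertOp h (lam t) (u t) i j) (Icc (0 : ℝ) T) t) ∧
          u 0 = y 0 ∧ u' 0 = y' 0 ∧
          (∀ i j, isInterior M N i j → u T i j = Z i j ∧ u' T i j = W i j) := by
  obtain ⟨V, hV⟩ := exists_grid_steering M N hh hT.ne
  obtain ⟨δ, hδ, hδ_spec⟩ := Metric.eventually_nhds_iff.1
    (eventually_exists_deformation hh hT hbd hder hode hnd V (lt_min hε hκ))
  refine ⟨δ, hδ, fun Z W hZW => ?_⟩
  let x : InteriorValues M N × InteriorValues M N :=
    (fun i j => Z i j - y T i j, fun i j => W i j - y' T i j)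
  obtain ⟨hVode, hV₀, hV₀', hV₁, hV₁'⟩ := hV x
  have hx : ‖x‖ < δ := norm_interiorValues_lt (Z := fun i j => Z i j - y T i j)
    (W := fun i j => W i j - y' T i j) hδ hZW
  obtain ⟨lam, lam', hlam, hlam', hlam_lt, hlam_spec⟩ :=
    hδ_spec (lt_of_eq_of_lt (dist_zero_right x) hx)
  refine ⟨lam, lam', hlam, hlam', fun t ht j => (lt_min_iff.1 (hlam_lt t ht j).1).1.le,
    fun t ht j => (lt_min_iff.1 (hlam_lt t ht j).2).2,
    fun t i j => y t i j + gridEval M N i j (V x t),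
    fun t i j => y' t i j + gridEval M N i j (derivative (V x) t),
    fun t ht i j hij => ?_,
    fun t ht i j => (hder t ht i j).add (hasDerivAt_clm_apply _ _ t).hasDerivWithinAt,
    fun t ht i j hij => ?_, ?_, ?_, fun i j hij => ?_⟩
  · simp only [hbd t ht i j hij, gridEval_of_not_isInterior hij.2, add_zero]
  · refine ((hode t ht i j hij).add (hasDerivAt_clm_apply _ _ t).hasDerivWithinAt).congr_deriv ?_
    rcases eq_or_ne i 1 with rfl | hi
    · rw [hlam_spec t ht j hij]
      ring
    · rw [pertOp, if_neg hi, discLap_add_gridEval, hVode t i j hij hi]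
      ring
  · simp [hV₀]
  · simp [hV₀']
  · simp [hV₁, hV₁', gridEval_of_isInterior hij, x]

end Controllability

/-- local exact controllability of the semi-discrete wave equation by the
shape of the domain. If the reference solution `y₀` (with time derivative `y₀'`) of
`∂_t² y₀ + A y₀ = F`, `y₀(0) = u₀`, `∂_t y₀(0) = u₁` satisfies the discrete
non-degeneracy condition, then every pair of interior values `(Z, W)` sufficiently close
to `(y₀(T), ∂_t y₀(T))` is reached at time `T` (state and velocity) by the solution of
the perturbed equation `∂_t² u + A(λ(t)) u = F` for some small `C¹` deformation `λ` with
`|λ_j| ≤ ε` and `|λ_j'| < 1`. -/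
theorem stmt14 (M N : ℤ) (hM : 3 ≤ M) (hN : 3 ≤ N) (h : ℝ) (hh : 0 < h)
    (T : ℝ) (hT : 0 < T)
    (F : ℝ → ℤ → ℤ → ℝ)
    (hF : ∀ i j, isInterior M N i j → ContinuousOn (fun t => F t i j) (Icc (0 : ℝ) T))
    (u₀ u₁ : ℤ → ℤ → ℝ)
    (hu₀ : ∀ i j, onBoundary M N i j → u₀ i j = 0)
    (hu₁ : ∀ i j, onBoundary M N i j → u₁ i j = 0)
    (y₀ y₀' : ℝ → ℤ → ℤ → ℝ)
    (hy₀bd : ∀ t ∈ Icc (0 : ℝ) T, ∀ i j, onBoundary M N i j → y₀ t i j = 0)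
    (hy₀der : ∀ t ∈ Icc (0 : ℝ) T, ∀ i j,
      HasDerivWithinAt (fun s => y₀ s i j) (y₀' t i j) (Icc (0 : ℝ) T) t)
    (hy₀ode : ∀ t ∈ Icc (0 : ℝ) T, ∀ i j, isInterior M N i j →
      HasDerivWithinAt (fun s => y₀' s i j) (F t i j - discLap h (y₀ t) i j)
        (Icc (0 : ℝ) T) t)
    (hy₀init : y₀ 0 = u₀) (hy₀init' : y₀' 0 = u₁)
    (hnd : ∀ t ∈ Icc (0 : ℝ) T, ∀ j : ℤ, 1 ≤ j → j ≤ N - 1 →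
      (1 / 2) * y₀ t 2 j - 2 * y₀ t 1 j ≠ 0) :
    ∃ ε ∈ Ioo (0 : ℝ) (1 / 2), ∃ δ > (0 : ℝ),
      ∀ Z W : ℤ → ℤ → ℝ,
        (∀ i j, isInterior M N i j → |Z i j - y₀ T i j| + |W i j - y₀' T i j| < δ) →
        ∃ lam lam' : ℝ → ℤ → ℝ,
          (∀ t ∈ Icc (0 : ℝ) T, ∀ j,
            HasDerivWithinAt (fun s => lam s j) (lam' t j) (Icc (0 : ℝ) T) t) ∧
          (∀ j, ContinuousOn (fun t => lam' t j) (Icc (0 : ℝ) T)) ∧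
          (∀ t ∈ Icc (0 : ℝ) T, ∀ j, |lam t j| ≤ ε) ∧
          (∀ t ∈ Icc (0 : ℝ) T, ∀ j, |lam' t j| < 1) ∧
          ∃ u u' : ℝ → ℤ → ℤ → ℝ,
            (∀ t ∈ Icc (0 : ℝ) T, ∀ i j, onBoundary M N i j → u t i j = 0) ∧
            (∀ t ∈ Icc (0 : ℝ) T, ∀ i j,
              HasDerivWithinAt (fun s => u s i j) (u' t i j) (Icc (0 : ℝ) T) t) ∧
            (∀ t ∈ Icc (0 : ℝ) T, ∀ i j, isInterior M N i j →
              HasDerivWithinAt (fun s => u' s i j)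
                (F t i j - pertOp h (lam t) (u t) i j) (Icc (0 : ℝ) T) t) ∧
            u 0 = u₀ ∧ u' 0 = u₁ ∧
            (∀ i j, isInterior M N i j → u T i j = Z i j ∧ u' T i j = W i j) := by
  subst hy₀init hy₀init'
  exact ⟨1 / 4, by norm_num,
    stmt14_general M N hh.ne' hT hy₀bd hy₀der hy₀ode hnd (by norm_num) one_pos⟩
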